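/- Let K = ℚ(√d₁, √d₂) be a biquadratic field with d₁, d₂ positive odd squarefree integers. If the ideal class group Cl_K is cyclic, then ω(|Δ_K|) ≤ 4, where Δ_K is the discriminant of K and ω(m) denotes the number of distinct prime divisors of m. -/

import Mathlib

open IntermediateField NumberField
noncomputable section
def biquad (d₁ d₂ : ℤ) : IntermediateField ℚ ℂ :=
  IntermediateField.adjoin ℚ {x : ℂ | x ^ 2 = (d₁ : ℂ) ∨ x ^ 2 = (d₂ : ℂ)}

open nonZeroDivisors Pointwise

/-!
The argument is genus theory for `K = ℚ(√dᵢ : i ∈ ι)`. A prime ramified in `K` is ramified in some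
`ℚ(√dᵢ)`; let `S` be the set of these primes and attach to each a quadratic character. By quadratic
reciprocity, the characters at the primes ramified in `ℚ(√dᵢ)` multiply to the splitting character
of `ℚ(√dᵢ)`. Hence each of the at least `2 ^ (|S| - |ι|)` sign vectors on `S` with trivial product
for every `i` is, by Dirichlet's theorem, realised by a rational prime that splits completely in
`K`, and so by the norm of a prime ideal. Conversely, if the class of an ideal `I` is a square,
then `±N(I)` is, up to a rational square, a norm from `K` and therefore from every `ℚ(√dᵢ)`, which
makes all its characters trivial. So each class modulo squares comes from at most two sign vectors,
and the index of the squares in the class group is at least `2 ^ (|S| - |ι| - 1)`.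
-/

section SquareRoots

variable {F L : Type*} [Field F] [Field L] [Algebra F L] {T : Set L}

lemma normal_of_adjoin_sqrt (hT : ∀ s ∈ T, ∃ d : F, s ^ 2 = algebraMap F L d)
    (hgen : adjoin F T = ⊤) : Normal F L := by
  have hsplit : ∀ s ∈ T, IsIntegral F s ∧ ((minpoly F s).map (algebraMap F L)).Splits := by
    intro s hs
    obtain ⟨d, hd⟩ := hT s hs
    have hmonic : (Polynomial.X ^ 2 - Polynomial.C d).Monic :=
      Polynomial.monic_X_pow_sub_C d two_ne_zero
    have hfactor : (Polynomial.X ^ 2 - Polynomial.C d).map (algebraMap F L) =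
        (Polynomial.X - Polynomial.C s) * (Polynomial.X - Polynomial.C (-s)) := by
      simp only [Polynomial.map_sub, Polynomial.map_pow, Polynomial.map_X, Polynomial.map_C, ← hd,
        Polynomial.C_pow, Polynomial.C_neg]
      ring
    refine ⟨⟨_, hmonic, by simp [hd]⟩, .of_dvd ?_ (hmonic.map _).ne_zero
      (Polynomial.map_dvd _ (minpoly.dvd F s (p := Polynomial.X ^ 2 - .C d) (by simp [hd])))⟩
    rw [hfactor]
    exact (Polynomial.Splits.X_sub_C _).mul (Polynomial.Splits.X_sub_C _)
  refine normal_iff.mpr fun x ↦ ?_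
  have hx : x ∈ adjoin F T := hgen ▸ mem_top
  have halg := (isAlgebraic_adjoin fun s hs ↦ (hsplit s hs).1).isAlgebraic ⟨x, hx⟩
  exact ⟨(halg.algebraMap (A := L)).isIntegral, splits_of_mem_adjoin F L hsplit hx⟩

lemma algEquiv_eq_one_of_adjoin_eq_top (hgen : adjoin F T = ⊤) {σ : Gal(L/F)}
    (h : ∀ s ∈ T, σ s = s) : σ = 1 := by
  have hle : adjoin F T ≤ fixedField (Subgroup.zpowers σ) := by
    refine adjoin_le_iff.mpr fun s hs ↦ (mem_fixedField_iff _ s).mpr fun τ hτ ↦ ?_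
    have hσ : σ ∈ MulAction.stabilizer Gal(L/F) s := h s hs
    exact Subgroup.zpowers_le.mpr hσ hτ
  rwa [hgen, le_iff_le, fixingSubgroup_top, Subgroup.zpowers_le, Subgroup.mem_bot] at hle

lemma algEquiv_sqrt_eq_neg {d : ℤ} {s : L} (hs : s ^ 2 = d) {σ : Gal(L/F)} (hσ : σ s ≠ s) :
    σ s = -s := by
  have : σ s ^ 2 = s ^ 2 := by rw [← map_pow, hs, map_intCast]
  exact (sq_eq_sq_iff_eq_or_eq_neg.mp this).resolve_left hσ

end SquareRoots

section Galois

variable {K : Type*} [Field K] [NumberField K] [IsGalois ℚ K]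

lemma not_dvd_discr_of_inertia_eq_bot {p : ℤ} (hp : Prime p)
    (h : ∀ P : Ideal (𝓞 K), P.IsPrime → (p : 𝓞 K) ∈ P → P.inertia Gal(K/ℚ) = ⊥) :
    ¬ p ∣ discr K := by
  have : IsGaloisGroup Gal(K/ℚ) ℤ (𝓞 K) := .of_isFractionRing Gal(K/ℚ) ℤ (𝓞 K) ℚ K
  rw [not_dvd_discr_iff_forall_mem K (𝓞 K) hp]
  intro P hP hpP
  have hcard := Ideal.card_inertia_eq_ramificationIdxIn (G := Gal(K/ℚ)) (P.under ℤ) P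
  rwa [h P hP hpP, Subgroup.card_bot, Ideal.ramificationIdxIn_eq_ramificationIdx _ P Gal(K/ℚ),
    eq_comm, Ideal.ramificationIdx_eq_one_iff] at hcard

lemma absNorm_eq_of_stabilizer_eq_bot {p : ℤ} (hp : Prime p) (P : Ideal (𝓞 K)) [P.IsPrime]
    [P.LiesOver (Ideal.span {p})] (h : MulAction.stabilizer Gal(K/ℚ) P = ⊥) :
    P.absNorm = p.natAbs := by
  have : IsGaloisGroup Gal(K/ℚ) ℤ (𝓞 K) := .of_isFractionRing Gal(K/ℚ) ℤ (𝓞 K) ℚ K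
  have : (Ideal.span {p}).IsPrime := (Ideal.span_singleton_prime hp.ne_zero).mpr hp
  have hcard :=
    Ideal.card_stabilizer_eq_card_inertia_mul_finrank (G := Gal(K/ℚ)) (Ideal.span {p}) P
  rw [h, Subgroup.card_bot, eq_comm, mul_eq_one] at hcard
  rw [← Ideal.natAbs_pow_inertiaDeg p P, hcard.2, pow_one]

end Galois

/-- The discriminant of `ℚ(√d)` for a squarefree integer `d ≠ 1`. -/
def quadDiscr (d : ℤ) : ℤ := if d % 4 = 1 then d else 4 * d

lemma quadDiscr_dvd (d : ℤ) : quadDiscr d ∣ 4 * d := by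
  unfold quadDiscr
  split_ifs
  · exact Dvd.intro_left 4 rfl
  · exact dvd_rfl

lemma dvd_of_intCast_mem {R : Type*} [CommRing R] {P : Ideal R} (hP : P ≠ ⊤) {p n : ℤ}
    (hp : Prime p) (hpP : (p : R) ∈ P) (hn : (n : R) ∈ P) : p ∣ n := by
  by_contra hpn
  obtain ⟨a, b, hab⟩ := hp.coprime_iff_not_dvd.mpr hpn
  refine hP ((Ideal.eq_top_iff_one P).mpr ?_)
  rw [← Int.cast_one, ← hab, Int.cast_add, Int.cast_mul, Int.cast_mul]
  exact P.add_mem (P.mul_mem_left _ hpP) (P.mul_mem_left _ hn)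

section IntegralSquareRoots

variable {K : Type*} [Field K] {p d : ℤ} {s : K}

lemma exists_ringOfIntegers_sq_eq (hs : s ^ 2 = d) : ∃ t : 𝓞 K, (t : K) = s ∧ t ^ 2 = d := by
  have hint : IsIntegral ℤ s := .of_pow two_pos (hs ▸ isIntegral_algebraMap (x := d))
  exact ⟨⟨s, hint⟩, rfl, RingOfIntegers.ext hs⟩

variable [CharZero K] {P : Ideal (𝓞 K)} {σ : Gal(K/ℚ)}

lemma exists_smul_sub_sq_eq_quadDiscr (hs : s ^ 2 = d) :
    ∃ w : 𝓞 K, ∀ σ : Gal(K/ℚ), σ s ≠ s → (σ • w - w) ^ 2 = quadDiscr d := by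
  obtain ⟨t, rfl, ht⟩ := exists_ringOfIntegers_sq_eq hs
  by_cases hd : d % 4 = 1
  · obtain ⟨k, hk⟩ : 4 ∣ 1 - d := Int.dvd_of_emod_eq_zero (by lia)
    have hroot : ((1 + t : K) / 2) ^ 2 - (1 + t) / 2 + k = 0 := by
      have hk' : (1 - d : K) = 4 * k := mod_cast congrArg (Int.cast : ℤ → K) hk
      linear_combination hs / 4 - hk' / 4
    have hw : IsIntegral ℤ ((1 + t : K) / 2) :=
      ⟨.X ^ 2 - .X + .C k, by monicity!, by simpa [-eq_intCast] using hroot⟩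
    refine ⟨⟨_, hw⟩, fun σ hσ ↦ RingOfIntegers.ext ?_⟩
    have hsmul : σ ((1 + t : K) / 2) = (1 - t) / 2 := by
      rw [map_div₀, map_add, map_one, map_ofNat, algEquiv_sqrt_eq_neg hs hσ, sub_eq_add_neg]
    rw [quadDiscr, if_pos hd]
    change (σ ((1 + t : K) / 2) - (1 + t) / 2) ^ 2 = algebraMap (𝓞 K) K d
    rw [hsmul, map_intCast]
    linear_combination hs
  · refine ⟨t, fun σ hσ ↦ ?_⟩
    have : σ • t = -t := RingOfIntegers.ext (algEquiv_sqrt_eq_neg hs hσ)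
    rw [this, quadDiscr, if_neg hd]
    push_cast
    linear_combination 4 * ht

lemma algEquiv_sqrt_eq_of_mem_inertia [P.IsPrime] (hp : Prime p) (hpP : (p : 𝓞 K) ∈ P)
    (hs : s ^ 2 = d) (hpd : ¬ p ∣ quadDiscr d) (hσ : σ ∈ P.inertia Gal(K/ℚ)) : σ s = s := by
  obtain ⟨w, hw⟩ := exists_smul_sub_sq_eq_quadDiscr hs
  contrapose! hpd
  refine dvd_of_intCast_mem Ideal.IsPrime.ne_top' hp hpP ?_
  rw [← hw σ hpd]
  exact P.pow_mem_of_mem (hσ w) 2 two_pos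

lemma algEquiv_sqrt_eq_of_mem_stabilizer [P.IsPrime] (hp : Prime p) (hpP : (p : 𝓞 K) ∈ P)
    (hs : s ^ 2 = d) (hpd : ¬ p ∣ 4 * d) {e : ℤ} (he : p ∣ d - e ^ 2)
    (hσ : σ ∈ MulAction.stabilizer Gal(K/ℚ) P) : σ s = s := by
  obtain ⟨t, rfl, ht⟩ := exists_ringOfIntegers_sq_eq hs
  contrapose! hpd
  have hneg : σ • t = -t := RingOfIntegers.ext (algEquiv_sqrt_eq_neg hs hpd)
  obtain ⟨c, hc⟩ : ∃ c : ℤ, t - c ∈ P := by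
    obtain ⟨k, hk⟩ := he
    have hk' : (d - e ^ 2 : 𝓞 K) = k * p := by
      rw [mul_comm]
      exact_mod_cast congrArg (Int.cast : ℤ → 𝓞 K) hk
    have hmem : (t - e) * (t - (-e : ℤ)) ∈ P := by
      have : (t - e) * (t - (-e : ℤ)) = k * p := by
        push_cast
        linear_combination ht + hk'
      exact this ▸ P.mul_mem_left _ hpP
    exact (Ideal.IsPrime.mem_or_mem ‹_› hmem).elim (⟨_, ·⟩) (⟨_, ·⟩)
  have hfix : σ • (c : 𝓞 K) = c := RingOfIntegers.ext (map_intCast σ c)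
  have hσc : -t - c ∈ P := by
    have := Ideal.smul_mem_pointwise_smul σ (t - c) P hc
    rwa [MulAction.mem_stabilizer_iff.mp hσ, smul_sub, hneg, hfix] at this
  refine dvd_of_intCast_mem Ideal.IsPrime.ne_top' hp hpP ?_
  have : ((4 * d : ℤ) : 𝓞 K) = ((t - c) - (-t - c)) ^ 2 := by
    push_cast
    linear_combination -4 * ht
  exact this ▸ P.pow_mem_of_mem (P.sub_mem hc hσc) 2 two_pos

end IntegralSquareRoots

section Multiquadratic

variable {K ι : Type*} [Field K] [NumberField K] {d : ι → ℤ} {s : ι → K}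

lemma isGalois_of_adjoin_range_sqrt (hs : ∀ i, s i ^ 2 = d i) (hgen : adjoin ℚ (Set.range s) = ⊤) :
    IsGalois ℚ K where
  to_normal := normal_of_adjoin_sqrt (Set.forall_mem_range.mpr fun i ↦ ⟨d i, by simp [hs i]⟩) hgen

lemma exists_dvd_quadDiscr_of_dvd_discr (hs : ∀ i, s i ^ 2 = d i)
    (hgen : adjoin ℚ (Set.range s) = ⊤) {p : ℤ} (hp : Prime p) (hpK : p ∣ discr K) :
    ∃ i, p ∣ quadDiscr (d i) := by
  have := isGalois_of_adjoin_range_sqrt hs hgen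
  contrapose! hpK
  refine not_dvd_discr_of_inertia_eq_bot hp fun P hP hpP ↦ (Subgroup.eq_bot_iff_forall _).mpr ?_
  exact fun σ hσ ↦ algEquiv_eq_one_of_adjoin_eq_top hgen <| Set.forall_mem_range.mpr fun i ↦
    algEquiv_sqrt_eq_of_mem_inertia hp hpP (hs i) (hpK i) hσ

lemma exists_absNorm_eq_of_isSquare (hs : ∀ i, s i ^ 2 = d i)
    (hgen : adjoin ℚ (Set.range s) = ⊤) {q : ℕ} (hq : q.Prime) (hqd : ∀ i, ¬ (q : ℤ) ∣ 4 * d i)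
    (hsq : ∀ i, IsSquare (d i : ZMod q)) : ∃ Q : Ideal (𝓞 K), Q.absNorm = q := by
  have := isGalois_of_adjoin_range_sqrt hs hgen
  have hq' : Prime (q : ℤ) := Nat.prime_iff_prime_int.mp hq
  have : (Ideal.span {(q : ℤ)}).IsPrime := (Ideal.span_singleton_prime hq'.ne_zero).mpr hq'
  obtain ⟨⟨Q, hQ, hQq⟩⟩ := (Ideal.span {(q : ℤ)}).nonempty_primesOver (S := 𝓞 K)
  refine ⟨Q, absNorm_eq_of_stabilizer_eq_bot hq' Q ((Subgroup.eq_bot_iff_forall _).mpr ?_)⟩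
  have hqQ : ((q : ℤ) : 𝓞 K) ∈ Q := by
    simpa using (Ideal.mem_of_liesOver Q _ (q : ℤ)).mp (Ideal.mem_span_singleton_self _)
  refine fun σ hσ ↦ algEquiv_eq_one_of_adjoin_eq_top hgen <| Set.forall_mem_range.mpr fun i ↦ ?_
  obtain ⟨e, he⟩ : ∃ e : ℤ, (q : ℤ) ∣ d i - e ^ 2 := by
    obtain ⟨r, hr⟩ := hsq i
    obtain ⟨e, rfl⟩ := ZMod.intCast_surjective r
    exact ⟨e, (ZMod.intCast_zmod_eq_zero_iff_dvd _ q).mp (by push_cast; rw [hr, sq, sub_self])⟩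
  exact algEquiv_sqrt_eq_of_mem_stabilizer hq' hqQ (hs i) (hqd i) he hσ

end Multiquadratic

section Norm

lemma exists_norm_eq_sq_sub_mul_sq {F L : Type*} [Field F] [Field L] [Algebra F L] {d : F}
    (hd : ¬ IsSquare d) {s : L} (hs : s ^ 2 = algebraMap F L d) (c : L) :
    ∃ u v : F, Algebra.norm F c = u ^ 2 - d * v ^ 2 := by
  have : Fact (∀ r : F, r ^ 2 ≠ d + 0 * r) :=
    ⟨fun r hr ↦ hd ⟨r, by rw [← sq, hr, zero_mul, add_zero]⟩⟩
  let φ : QuadraticAlgebra F d 0 →ₐ[F] L :=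
    QuadraticAlgebra.lift ⟨s, by rw [← sq, hs, zero_smul, add_zero, Algebra.algebraMap_eq_smul_one]⟩
  let : Algebra (QuadraticAlgebra F d 0) L := φ.toAlgebra
  have : IsScalarTower F (QuadraticAlgebra F d 0) L := .of_algHom φ
  rw [← Algebra.norm_norm (S := QuadraticAlgebra F d 0)]
  set z := Algebra.norm (QuadraticAlgebra F d 0) c
  refine ⟨z.re, z.im, ?_⟩
  have hz : Algebra.norm F z = z.norm :=
    (Algebra.norm_apply F z).trans (QuadraticAlgebra.det_toLinearMap_eq_norm z)
  rw [hz, QuadraticAlgebra.norm_def]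
  ring

variable {K : Type*} [Field K] [NumberField K]

lemma exists_units_mul_absNorm_eq_norm_of_mk0_eq_sq {I J : (Ideal (𝓞 K))⁰}
    (h : ClassGroup.mk0 I = ClassGroup.mk0 J ^ 2) :
    ∃ (ε : ℤˣ) (X : ℚ) (c : K), X ≠ 0 ∧
      ((ε * Ideal.absNorm I.1 : ℤ) : ℚ) * X ^ 2 = Algebra.norm ℚ c := by
  rw [← map_pow, ClassGroup.mk0_eq_mk0_iff] at h
  obtain ⟨x, y, hx, -, hxy⟩ := h
  have hnorm := congrArg Ideal.absNorm hxy
  rw [map_mul, map_mul, SubmonoidClass.coe_pow, map_pow, Ideal.absNorm_span_singleton,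
    Ideal.absNorm_span_singleton] at hnorm
  obtain ⟨ε, hε⟩ : Associated (Algebra.norm ℤ x * Ideal.absNorm I.1)
      (Algebra.norm ℤ y * Ideal.absNorm J.1 ^ 2) := by
    rw [Int.associated_iff_natAbs]
    simpa [Int.natAbs_mul, Int.natAbs_pow] using hnorm
  have hx0 : (Algebra.norm ℤ x : ℚ) ≠ 0 := mod_cast Algebra.norm_ne_zero_iff.mpr hx
  have hJ0 : (Ideal.absNorm J.1 : ℚ) ≠ 0 :=
    mod_cast Ideal.absNorm_ne_zero_of_nonZeroDivisors J
  refine ⟨ε, Algebra.norm ℤ x / Ideal.absNorm J.1, (x * y : 𝓞 K), div_ne_zero hx0 hJ0, ?_⟩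
  have hε' : (Algebra.norm ℤ x * Ideal.absNorm I.1 * (ε : ℤ) : ℚ) =
    Algebra.norm ℤ y * Ideal.absNorm J.1 ^ 2 := mod_cast hε
  rw [← Algebra.coe_norm_int, map_mul]
  push_cast
  field_simp
  linear_combination hε'

end Norm

/-- The quadratic character attached to a prime `p`: the Legendre symbol modulo `p` if `p` is odd,
and the nontrivial character modulo `4` if `p = 2`. -/
def genusChar (p : ℕ) : ℤ →* ℤ where
  toFun n := if p = 2 then ZMod.χ₄ n else jacobiSym n p
  map_one' := by split_ifs <;> simp
  map_mul' m n := by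
    split_ifs
    · rw [Int.cast_mul, map_mul]
    · exact jacobiSym.mul_left m n p

lemma genusChar_two (n : ℤ) : genusChar 2 n = ZMod.χ₄ n := rfl

lemma genusChar_of_ne_two {p : ℕ} (hp : p ≠ 2) (n : ℤ) : genusChar p n = jacobiSym n p :=
  if_neg hp

/-- The modulus of `genusChar p`. -/
def genusModulus (p : ℕ) : ℕ := if p = 2 then 4 else p

lemma genusChar_eq_of_modEq {p : ℕ} {a b : ℤ} (h : a ≡ b [ZMOD genusModulus p]) :
    genusChar p a = genusChar p b := by
  by_cases hp : p = 2
  · subst hp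
    rw [genusChar_two, genusChar_two, (ZMod.intCast_eq_intCast_iff a b 4).mpr h]
  · rw [genusModulus, if_neg hp] at h
    rw [genusChar_of_ne_two hp, genusChar_of_ne_two hp, jacobiSym.mod_left a, h,
      ← jacobiSym.mod_left]

lemma exists_coprime_genusChar_eq {p : ℕ} (hp : p.Prime) (u : ℤˣ) :
    ∃ a : ℕ, a.Coprime (genusModulus p) ∧ genusChar p a = u := by
  rcases Int.units_eq_one_or u with rfl | rfl
  · exact ⟨1, Nat.coprime_one_left _, map_one _⟩
  by_cases h2 : p = 2
  · subst h2
    exact ⟨3, by decide, by decide⟩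
  have := Fact.mk hp
  obtain ⟨b, hb⟩ := FiniteField.exists_nonsquare (F := ZMod p) (by rwa [ZMod.ringChar_zmod_n])
  refine ⟨b.val, ?_, ?_⟩
  · rw [genusModulus, if_neg h2, ← ZMod.isUnit_iff_coprime, ZMod.natCast_zmod_val]
    exact isUnit_iff_ne_zero.mpr fun h0 ↦ hb (h0 ▸ IsSquare.zero)
  · rw [genusChar_of_ne_two h2, ← jacobiSym.legendreSym.to_jacobiSym, Units.val_neg, Units.val_one,
      legendreSym.eq_neg_one_iff]
    simpa using hb

lemma coprime_genusModulus {p q : ℕ} (hp : p.Prime) (hq : q.Prime) (h : p ≠ q) :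
    (genusModulus p).Coprime (genusModulus q) := by
  have hpq := (Nat.coprime_primes hp hq).mpr h
  unfold genusModulus
  split_ifs with h₁ h₂ h₂
  · exact absurd (h₁.trans h₂.symm) h
  · subst h₁
    exact Nat.Coprime.pow_left 2 hpq
  · subst h₂
    exact Nat.Coprime.pow_right 2 hpq
  · exact hpq

lemma exists_prime_gt_forall_genusChar_eq {κ : Type*} [Finite κ] {p : κ → ℕ}
    (hp : ∀ k, (p k).Prime) (hinj : p.Injective) (h : κ → ℤˣ) (N : ℕ) :
    ∃ q > N, q.Prime ∧ ∀ k, genusChar (p k) q = h k := by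
  cases nonempty_fintype κ
  choose a ha hah using fun k ↦ exists_coprime_genusChar_eq (hp k) (h k)
  have hmod : ∀ k, genusModulus (p k) ≠ 0 := fun k ↦ by
    unfold genusModulus
    split_ifs
    exacts [four_ne_zero, (hp k).ne_zero]
  obtain ⟨c, hc⟩ := Nat.chineseRemainderOfFinset a (fun k ↦ genusModulus (p k)) Finset.univ
    (fun k _ ↦ hmod k) fun k _ l _ hkl ↦ coprime_genusModulus (hp k) (hp l) (hinj.ne hkl)
  have : NeZero (∏ k, genusModulus (p k)) := ⟨Finset.prod_ne_zero_iff.mpr fun k _ ↦ hmod k⟩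
  have hcop : c.Coprime (∏ k, genusModulus (p k)) :=
    Nat.Coprime.prod_right fun k hk ↦ (hc k hk).gcd_eq.trans (ha k)
  obtain ⟨q, hqN, hq, hqc⟩ := Nat.forall_exists_prime_gt_and_eq_mod
    ((ZMod.isUnit_iff_coprime c _).mpr hcop) N
  refine ⟨q, hqN, hq, fun k ↦ (genusChar_eq_of_modEq ?_).trans (hah k)⟩
  have hqc' : q ≡ c [MOD genusModulus (p k)] :=
    ((ZMod.natCast_eq_natCast_iff _ _ _).mp hqc).of_dvd
      (Finset.dvd_prod_of_mem (fun k ↦ genusModulus (p k)) (Finset.mem_univ k))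
  exact Int.natCast_modEq_iff.mpr (hqc'.trans (hc k (Finset.mem_univ k)))

lemma exists_eq_mul_intCast_gcd_eq_one {κ : Type*} [Fintype κ] {f : κ → ℚ} (hf : f ≠ 0) :
    ∃ c : ℚ, c ≠ 0 ∧ ∃ g : κ → ℤ, (∀ k, f k = c * g k) ∧ Finset.univ.gcd g = 1 := by
  obtain ⟨b, hb⟩ := IsLocalization.exist_integer_multiples_of_finite (nonZeroDivisors ℤ) f
  choose n hn using hb
  have hb0 : ((b : ℤ) : ℚ) ≠ 0 := mod_cast nonZeroDivisors.coe_ne_zero b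
  have hnf : ∀ k, (n k : ℚ) = b * f k := fun k ↦ by simpa using hn k
  obtain ⟨k₀, hk₀⟩ := Function.ne_iff.mp hf
  obtain ⟨g, hg, hgcd⟩ := Finset.extract_gcd n ⟨k₀, Finset.mem_univ k₀⟩
  have hgcd0 : Finset.univ.gcd n ≠ 0 := fun h0 ↦ by
    have : n k₀ = 0 := Finset.gcd_eq_zero_iff.mp h0 k₀ (Finset.mem_univ k₀)
    simp_all
  refine ⟨(Finset.univ.gcd n : ℤ) / (b : ℤ), div_ne_zero (mod_cast hgcd0) hb0, g, fun k ↦ ?_, hgcd⟩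
  have hgk : (n k : ℚ) = (Finset.univ.gcd n : ℤ) * g k := mod_cast hg k (Finset.mem_univ k)
  rw [div_mul_eq_mul_div, ← hgk, hnf, mul_div_cancel_left₀ _ hb0]

lemma exists_primitive_mul_sq_eq {m d : ℤ} {X u v : ℚ} (hX : X ≠ 0)
    (h : m * X ^ 2 = u ^ 2 - d * v ^ 2) :
    ∃ x y z : ℤ, m * x ^ 2 = y ^ 2 - d * z ^ 2 ∧ ∀ n : ℤ, n ∣ x → n ∣ y → n ∣ z → IsUnit n := by
  obtain ⟨c, hc, g, hg, hgcd⟩ := exists_eq_mul_intCast_gcd_eq_one (f := ![X, u, v])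
    (Function.ne_iff.mpr ⟨0, hX⟩)
  refine ⟨g 0, g 1, g 2, ?_, fun n h₀ h₁ h₂ ↦ isUnit_of_dvd_one (hgcd ▸ Finset.dvd_gcd ?_)⟩
  · have h₀ : X = c * g 0 := hg 0
    have h₁ : u = c * g 1 := hg 1
    have h₂ : v = c * g 2 := hg 2
    rw [h₀, h₁, h₂] at h
    have : (m * g 0 ^ 2 : ℚ) = g 1 ^ 2 - d * g 2 ^ 2 :=
      mul_left_cancel₀ (pow_ne_zero 2 hc) (by linear_combination h)
    exact_mod_cast this
  · intro k _
    fin_cases k <;> assumption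

lemma not_dvd_of_primitive_mul_sq_eq {p d m x y z : ℤ} (hp : Prime p) (hd : Squarefree d)
    (hpd : p ∣ d) (h : m * x ^ 2 = y ^ 2 - d * z ^ 2)
    (hprim : ∀ n : ℤ, n ∣ x → n ∣ y → n ∣ z → IsUnit n) : ¬ p ∣ x := by
  intro hx
  obtain ⟨e, rfl⟩ := hpd
  have hy : p ∣ y := hp.dvd_of_dvd_pow (n := 2) <| by
    have : y ^ 2 = m * x ^ 2 + p * e * z ^ 2 := by linear_combination -h
    rw [this]
    exact dvd_add (dvd_mul_of_dvd_right (dvd_pow hx two_ne_zero) _) ⟨e * z ^ 2, by ring⟩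
  have hez : p ∣ e * z ^ 2 := by
    obtain ⟨x', rfl⟩ := hx
    obtain ⟨y', rfl⟩ := hy
    exact ⟨y' ^ 2 - m * x' ^ 2, mul_left_cancel₀ hp.ne_zero (by linear_combination h)⟩
  have he : ¬ p ∣ e := fun he ↦ hp.not_isUnit (hd p (mul_dvd_mul_left p he))
  exact hp.not_isUnit (hprim p hx hy (hp.dvd_of_dvd_pow ((hp.dvd_or_dvd hez).resolve_left he)))

lemma isSquare_zmod_of_primitive_mul_sq_eq {p : ℕ} [Fact p.Prime] {d m x y z : ℤ}
    (hd : Squarefree d) (hpd : (p : ℤ) ∣ d) (h : m * x ^ 2 = y ^ 2 - d * z ^ 2)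
    (hprim : ∀ n : ℤ, n ∣ x → n ∣ y → n ∣ z → IsUnit n) : IsSquare (m : ZMod p) := by
  have hx : (x : ZMod p) ≠ 0 := by
    rw [Ne, ZMod.intCast_zmod_eq_zero_iff_dvd]
    exact not_dvd_of_primitive_mul_sq_eq (Nat.prime_iff_prime_int.mp Fact.out) hd hpd h hprim
  have hd0 : (d : ZMod p) = 0 := (ZMod.intCast_zmod_eq_zero_iff_dvd d p).mpr hpd
  have hmod : (m * x ^ 2 : ZMod p) = y ^ 2 - d * z ^ 2 :=
    mod_cast congrArg (Int.cast : ℤ → ZMod p) h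
  refine ⟨y / x, ?_⟩
  field_simp
  linear_combination hmod - z ^ 2 * hd0

lemma chi_four_eq_one_of_primitive_mul_sq_eq {d m x y z : ℤ} (hd : d % 4 = 3)
    (hm : ZMod.χ₄ m ≠ 0) (h : m * x ^ 2 = y ^ 2 - d * z ^ 2)
    (hprim : ∀ n : ℤ, n ∣ x → n ∣ y → n ∣ z → IsUnit n) : ZMod.χ₄ m = 1 := by
  have hd1 : (d : ZMod 4) = (-1 : ℤ) :=
    (ZMod.intCast_eq_intCast_iff d (-1) 4).mpr (by rw [Int.ModEq]; lia)
  have hmod : (m * x ^ 2 : ZMod 4) = y ^ 2 + z ^ 2 := by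
    have : (m * x ^ 2 : ZMod 4) = y ^ 2 - d * z ^ 2 := mod_cast congrArg (Int.cast : ℤ → ZMod 4) h
    rw [this, hd1, Int.cast_neg, Int.cast_one]
    ring
  have htwo : ∀ n : ℤ, 2 * (n : ZMod 4) = 0 → 2 ∣ n := fun n hn ↦ by
    have := (ZMod.intCast_zmod_eq_zero_iff_dvd (2 * n) 4).mp (by exact_mod_cast hn)
    lia
  have hcases : ∀ m x y z : ZMod 4, ZMod.χ₄ m ≠ 0 → m * x ^ 2 = y ^ 2 + z ^ 2 →
      ZMod.χ₄ m = 1 ∨ 2 * x = 0 ∧ 2 * y = 0 ∧ 2 * z = 0 := by decide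
  refine (hcases m x y z hm hmod).resolve_right fun ⟨hx, hy, hz⟩ ↦ ?_
  exact Int.prime_two.not_isUnit (hprim 2 (htwo x hx) (htwo y hy) (htwo z hz))

lemma not_isSquare_of_squarefree_of_ne_one {d : ℤ} (hd : Squarefree d) (h1 : d ≠ 1) :
    ¬ IsSquare (d : ℚ) := by
  rw [Rat.isSquare_intCast_iff]
  rintro ⟨r, rfl⟩
  exact h1 (Int.isUnit_mul_self (hd r dvd_rfl))

lemma two_dvd_quadDiscr_iff {d : ℤ} (hd : Odd d) : 2 ∣ quadDiscr d ↔ d % 4 = 3 := by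
  unfold quadDiscr
  obtain ⟨k, rfl⟩ := hd
  split_ifs <;> lia

lemma dvd_of_dvd_quadDiscr {p : ℕ} (hp : p.Prime) (h2 : p ≠ 2) {d : ℤ}
    (h : (p : ℤ) ∣ quadDiscr d) : (p : ℤ) ∣ d := by
  refine ((Nat.prime_iff_prime_int.mp hp).dvd_or_dvd (h.trans (quadDiscr_dvd d))).resolve_left ?_
  intro h4
  exact h2 ((Nat.prime_dvd_prime_iff_eq hp Nat.prime_two).mp
    (hp.dvd_of_dvd_pow (n := 2) (Int.natCast_dvd_natCast.mp h4)))

lemma genusChar_eq_one_of_mul_sq_eq {d m : ℤ} (hd : Squarefree d) (hodd : Odd d) {p : ℕ}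
    (hp : p.Prime) (hpd : (p : ℤ) ∣ quadDiscr d) (hm : genusChar p m ≠ 0) {X u v : ℚ}
    (hX : X ≠ 0) (h : m * X ^ 2 = u ^ 2 - d * v ^ 2) : genusChar p m = 1 := by
  obtain ⟨x, y, z, hxyz, hprim⟩ := exists_primitive_mul_sq_eq hX h
  by_cases h2 : p = 2
  · subst h2
    exact chi_four_eq_one_of_primitive_mul_sq_eq ((two_dvd_quadDiscr_iff hodd).mp hpd) hm hxyz hprim
  · have := Fact.mk hp
    rw [genusChar_of_ne_two h2, ← jacobiSym.legendreSym.to_jacobiSym] at hm ⊢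
    have hm0 : (m : ZMod p) ≠ 0 := fun h0 ↦ hm ((legendreSym.eq_zero_iff p m).mpr h0)
    exact (legendreSym.eq_one_iff p hm0).mpr
      (isSquare_zmod_of_primitive_mul_sq_eq hd (dvd_of_dvd_quadDiscr hp h2 hpd) hxyz hprim)

lemma jacobiSym_eq_prod_primeFactors (a : ℤ) {n : ℕ} (hn : Squarefree n) :
    jacobiSym a n = ∏ p ∈ n.primeFactors, jacobiSym a p := by
  have hnodup := (Nat.squarefree_iff_nodup_primeFactorsList hn.ne_zero).mp hn
  rw [jacobiSym, Nat.primeFactors, List.prod_toFinset _ hnodup,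
    ← List.pmap_eq_map fun p hp ↦ Nat.prime_of_mem_primeFactorsList hp]
  congr 1
  exact List.pmap_congr_left _ fun p _ hp _ ↦ @jacobiSym.legendreSym.to_jacobiSym p ⟨hp⟩ a

lemma jacobiSym_eq_mul_jacobiSym_natAbs {d : ℤ} (hd : Odd d) {q : ℕ} (hq : Odd q) :
    jacobiSym d q = (if d % 4 = 1 then 1 else ZMod.χ₄ q) * jacobiSym q d.natAbs := by
  have habs : jacobiSym d.natAbs q =
      (if d.natAbs % 4 = 1 then 1 else ZMod.χ₄ q) * jacobiSym q d.natAbs := by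
    rw [← jacobiSym.quadratic_reciprocity_if (Nat.odd_iff.mp (Int.natAbs_odd.mpr hd))
      (Nat.odd_iff.mp hq), ZMod.χ₄_nat_eq_if_mod_four]
    grind
  rcases Int.natAbs_eq d with h | h
  · have hmod : d % 4 = 1 ↔ d.natAbs % 4 = 1 := by lia
    simp only [hmod]
    rwa [← h] at habs
  · have hmod : d % 4 = 1 ↔ ¬ d.natAbs % 4 = 1 := by grind
    have hsq : ZMod.χ₄ q * ZMod.χ₄ q = 1 := by
      rw [ZMod.χ₄_nat_eq_if_mod_four]
      grind
    nth_rw 1 [h]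
    rw [jacobiSym.neg _ hq, habs, ← mul_assoc]
    simp only [hmod]
    split_ifs
    · rw [mul_one]
    · rw [hsq]

lemma primeFactors_quadDiscr {d : ℤ} (hd : Odd d) : (quadDiscr d).natAbs.primeFactors =
    if d % 4 = 1 then d.natAbs.primeFactors else insert 2 d.natAbs.primeFactors := by
  have hd0 : d.natAbs ≠ 0 := by grind
  unfold quadDiscr
  split_ifs
  · rfl
  · rw [Int.natAbs_mul, Nat.primeFactors_mul (by decide) hd0]
    have : (4 : ℤ).natAbs.primeFactors = {2} := Nat.primeFactors_prime_pow two_ne_zero Nat.prime_two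
    rw [this, Finset.insert_eq]

lemma jacobiSym_eq_prod_genusChar {d : ℤ} (hd : Squarefree d) (hodd : Odd d) {q : ℕ}
    (hq : Odd q) :
    jacobiSym d q = ∏ p ∈ (quadDiscr d).natAbs.primeFactors, genusChar p q := by
  have h2 : 2 ∉ d.natAbs.primeFactors := fun h ↦
    Nat.not_even_iff_odd.mpr (Int.natAbs_odd.mpr hodd)
      (even_iff_two_dvd.mpr (Nat.dvd_of_mem_primeFactors h))
  have hprod : ∏ p ∈ d.natAbs.primeFactors, genusChar p q = jacobiSym q d.natAbs := by
    rw [jacobiSym_eq_prod_primeFactors _ (Int.squarefree_natAbs.mpr hd)]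
    exact Finset.prod_congr rfl fun p hp ↦ genusChar_of_ne_two (ne_of_mem_of_not_mem hp h2) _
  rw [jacobiSym_eq_mul_jacobiSym_natAbs hodd hq, primeFactors_quadDiscr hodd]
  split_ifs
  · rw [hprod, one_mul]
  · rw [Finset.prod_insert h2, hprod, genusChar_two, Int.cast_natCast]

section Genus

variable {ι : Type*} [Fintype ι]

/-- The primes that ramify in one of the fields `ℚ(√dᵢ)`, for squarefree `dᵢ`. -/
def ramifiedPrimes (d : ι → ℤ) : Finset ℕ :=
  Finset.univ.biUnion fun i ↦ (quadDiscr (d i)).natAbs.primeFactors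

variable {d : ι → ℤ}

lemma mem_ramifiedPrimes {p : ℕ} :
    p ∈ ramifiedPrimes d ↔ ∃ i, p ∈ (quadDiscr (d i)).natAbs.primeFactors := by
  simp only [ramifiedPrimes, Finset.mem_biUnion, Finset.mem_univ, true_and]

lemma prime_of_mem_ramifiedPrimes {p : ℕ} (hp : p ∈ ramifiedPrimes d) : p.Prime := by
  obtain ⟨i, hi⟩ := mem_ramifiedPrimes.mp hp
  exact Nat.prime_of_mem_primeFactors hi

variable (d) in
/-- The possible systems of genus characters: sign vectors on the ramified primes which, for every
`i`, multiply to `1` over the primes that ramify in `ℚ(√dᵢ)`. -/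
def genusGroup : Subgroup (ramifiedPrimes d → ℤˣ) :=
  (MonoidHom.pi fun i ↦ ∏ p : (quadDiscr (d i)).natAbs.primeFactors,
    Pi.evalMonoidHom (fun _ ↦ ℤˣ) ⟨p, mem_ramifiedPrimes.mpr ⟨i, p.2⟩⟩).ker

lemma mem_genusGroup {h : ramifiedPrimes d → ℤˣ} : h ∈ genusGroup d ↔
    ∀ i, ∏ p : (quadDiscr (d i)).natAbs.primeFactors,
      h ⟨p, mem_ramifiedPrimes.mpr ⟨i, p.2⟩⟩ = 1 := by
  simp only [genusGroup, MonoidHom.mem_ker, funext_iff, MonoidHom.pi_apply,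
    MonoidHom.finsetProd_apply, Pi.evalMonoidHom_apply, Pi.one_apply]

lemma two_pow_card_ramifiedPrimes_le :
    2 ^ (ramifiedPrimes d).card ≤ 2 ^ Fintype.card ι * Nat.card (genusGroup d) := by
  have hindex : (genusGroup d).index ≤ 2 ^ Fintype.card ι := by
    rw [genusGroup, Subgroup.index_ker]
    refine (Subgroup.card_le_card_group _).trans_eq ?_
    rw [Nat.card_fun, Nat.card_eq_fintype_card, Nat.card_eq_fintype_card, Fintype.card_units_int]
  have hcard : Nat.card (ramifiedPrimes d → ℤˣ) = 2 ^ (ramifiedPrimes d).card := by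
    rw [Nat.card_fun, Nat.card_eq_fintype_card, Fintype.card_units_int, Nat.card_eq_fintype_card,
      Fintype.card_coe]
  rw [← hcard, ← (genusGroup d).index_mul_card]
  exact Nat.mul_le_mul_right _ hindex

lemma prod_primeFactors_eq_one_of_mem_genusGroup {h : ramifiedPrimes d → ℤˣ}
    (hh : h ∈ genusGroup d) {f : ℕ → ℤ} (hf : ∀ p : ramifiedPrimes d, f p = h p) (i : ι) :
    ∏ p ∈ (quadDiscr (d i)).natAbs.primeFactors, f p = 1 := by
  rw [← Finset.prod_coe_sort, ← Units.val_one, ← mem_genusGroup.mp hh i, Units.coe_prod]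
  exact Finset.prod_congr rfl fun p _ ↦ hf ⟨p, _⟩

variable {K : Type*} [Field K] [NumberField K] {s : ι → K}

lemma exists_ideal_genusChar_absNorm_eq (hd : ∀ i, Squarefree (d i)) (hodd : ∀ i, Odd (d i))
    (hs : ∀ i, s i ^ 2 = d i) (hgen : adjoin ℚ (Set.range s) = ⊤) {h : ramifiedPrimes d → ℤˣ}
    (hh : h ∈ genusGroup d) :
    ∃ Q : (Ideal (𝓞 K))⁰, ∀ p : ramifiedPrimes d, genusChar p (Ideal.absNorm Q.1) = h p := by
  obtain ⟨q, hq2, hq, hqh⟩ := exists_prime_gt_forall_genusChar_eq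
    (fun p : ramifiedPrimes d ↦ prime_of_mem_ramifiedPrimes p.2) Subtype.val_injective h 2
  have hqodd : Odd q := hq.odd_of_ne_two hq2.ne'
  have := Fact.mk hq
  have hleg : ∀ i, legendreSym q (d i) = 1 := fun i ↦ by
    rw [jacobiSym.legendreSym.to_jacobiSym, jacobiSym_eq_prod_genusChar (hd i) (hodd i) hqodd]
    exact prod_primeFactors_eq_one_of_mem_genusGroup (f := fun p ↦ genusChar p q) hh hqh i
  have hne : ∀ i, (d i : ZMod q) ≠ 0 := fun i h0 ↦ by
    have := (legendreSym.eq_zero_iff q (d i)).mpr h0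
    exact one_ne_zero ((hleg i).symm.trans this)
  have hndvd : ∀ i, ¬ (q : ℤ) ∣ 4 * d i := fun i hdvd ↦ by
    have h4 : IsCoprime (q : ℤ) 4 :=
      Nat.isCoprime_iff_coprime.mpr (hqodd.coprime_two_right.pow_right 2)
    exact hne i ((ZMod.intCast_zmod_eq_zero_iff_dvd _ q).mpr (h4.dvd_of_dvd_mul_left hdvd))
  obtain ⟨Q, hQ⟩ := exists_absNorm_eq_of_isSquare hs hgen hq hndvd fun i ↦
    (legendreSym.eq_one_iff q (hne i)).mp (hleg i)
  have hQ0 : Q ≠ ⊥ := by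
    rintro rfl
    exact hq.ne_zero (hQ.symm.trans Ideal.absNorm_bot)
  exact ⟨⟨Q, mem_nonZeroDivisors_of_ne_zero hQ0⟩, fun p ↦ by rw [hQ, hqh p]⟩

lemma exists_units_forall_genusChar_mul_absNorm_eq_one (hd : ∀ i, Squarefree (d i))
    (hodd : ∀ i, Odd (d i)) (hs : ∀ i, s i ^ 2 = d i) {I J : (Ideal (𝓞 K))⁰}
    (hIJ : ClassGroup.mk0 I = ClassGroup.mk0 J ^ 2)
    (hI : ∀ p ∈ ramifiedPrimes d, genusChar p (Ideal.absNorm I.1) ≠ 0) :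
    ∃ ε : ℤˣ, ∀ p ∈ ramifiedPrimes d, genusChar p (ε * Ideal.absNorm I.1) = 1 := by
  obtain ⟨ε, X, c, hX, hc⟩ := exists_units_mul_absNorm_eq_norm_of_mk0_eq_sq hIJ
  refine ⟨ε, fun p hp ↦ ?_⟩
  obtain ⟨i, hi⟩ := mem_ramifiedPrimes.mp hp
  have hp' := Nat.prime_of_mem_primeFactors hi
  have hpd : (p : ℤ) ∣ quadDiscr (d i) := Int.natCast_dvd.mpr (Nat.dvd_of_mem_primeFactors hi)
  have hne : d i ≠ 1 := fun h1 ↦ by simp [h1, quadDiscr] at hi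
  obtain ⟨u, v, huv⟩ := exists_norm_eq_sq_sub_mul_sq
    (not_isSquare_of_squarefree_of_ne_one (hd i) hne) (by rw [hs i, map_intCast]) c
  refine genusChar_eq_one_of_mul_sq_eq (hd i) (hodd i) hp' hpd ?_ hX (hc.trans huv)
  rw [map_mul]
  exact mul_ne_zero (ε.isUnit.map _).ne_zero (hI p hp)

variable (d) in
/-- The sign vector of genus characters of `±1`. -/
def genusSign (ε : ℤˣ) (p : ramifiedPrimes d) : ℤˣ := Units.map (genusChar p) ε

lemma exists_eq_mul_genusSign (hd : ∀ i, Squarefree (d i)) (hodd : ∀ i, Odd (d i))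
    (hs : ∀ i, s i ^ 2 = d i) {g h : ramifiedPrimes d → ℤˣ} {I J : (Ideal (𝓞 K))⁰}
    (hI : ∀ p : ramifiedPrimes d, genusChar p (Ideal.absNorm I.1) = g p)
    (hJ : ∀ p : ramifiedPrimes d, genusChar p (Ideal.absNorm J.1) = h p)
    (hIJ : (ClassGroup.mk0 I)⁻¹ * ClassGroup.mk0 J ∈
      (powMonoidHom 2 : ClassGroup (𝓞 K) →* _).range) :
    ∃ ε, h = g * genusSign d ε := by
  obtain ⟨c, hc⟩ := hIJ
  obtain ⟨A, hA⟩ := ClassGroup.mk0_surjective (ClassGroup.mk0 I * c)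
  have hsq : ClassGroup.mk0 (I * J) = ClassGroup.mk0 A ^ 2 := by
    rw [hA, mul_pow, ← powMonoidHom_apply 2 c, hc, map_mul, sq]
    group
  have hchar : ∀ p : ramifiedPrimes d, genusChar p (Ideal.absNorm (I * J).1) = (g p * h p : ℤˣ) :=
    fun p ↦ by rw [Submonoid.coe_mul, map_mul, Nat.cast_mul, map_mul, hI, hJ, Units.val_mul]
  obtain ⟨ε, hε⟩ := exists_units_forall_genusChar_mul_absNorm_eq_one hd hodd hs hsq
    fun p hp ↦ by rw [hchar ⟨p, hp⟩]; exact Units.ne_zero _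
  refine ⟨ε, funext fun p ↦ ?_⟩
  have hone : genusSign d ε p * (g p * h p) = 1 := Units.ext <| by
    rw [Units.val_mul, ← hchar p, Units.val_one, ← hε p p.2, map_mul]
    rfl
  rw [← mul_assoc] at hone
  rw [eq_inv_of_mul_eq_one_right hone, Int.units_inv_eq_self, mul_comm, Pi.mul_apply]

theorem card_genusGroup_le (hd : ∀ i, Squarefree (d i)) (hodd : ∀ i, Odd (d i))
    (hs : ∀ i, s i ^ 2 = d i) (hgen : adjoin ℚ (Set.range s) = ⊤) :
    Nat.card (genusGroup d) ≤ 2 * (powMonoidHom 2 : ClassGroup (𝓞 K) →* _).range.index := by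
  choose Q hQ using fun h : genusGroup d ↦
    exists_ideal_genusChar_absNorm_eq hd hodd hs hgen h.2
  let f (h : genusGroup d) : ClassGroup (𝓞 K) ⧸ (powMonoidHom 2 : ClassGroup (𝓞 K) →* _).range :=
    ClassGroup.mk0 (Q h)
  have hfiber : ∀ h, ∃ ε, h.1 = (Function.invFun f (f h)).1 * genusSign d ε := fun h ↦
    exists_eq_mul_genusSign hd hodd hs (hQ _) (hQ h)
      (QuotientGroup.eq.mp (Function.apply_invFun_apply (f := f)))
  choose ε hε using hfiber
  have hinj : Function.Injective fun h ↦ (ε h, f h) := fun g h hgh ↦ by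
    obtain ⟨hεgh, hfgh⟩ : ε g = ε h ∧ f g = f h := Prod.ext_iff.mp hgh
    exact Subtype.ext (by rw [hε g, hε h, hεgh, hfgh])
  refine (Nat.card_le_card_of_injective _ hinj).trans_eq ?_
  rw [Nat.card_prod, Nat.card_eq_fintype_card, Fintype.card_units_int, Subgroup.index]

theorem two_pow_card_primeFactors_discr_le (hd : ∀ i, Squarefree (d i)) (hodd : ∀ i, Odd (d i))
    (hs : ∀ i, s i ^ 2 = d i) (hgen : adjoin ℚ (Set.range s) = ⊤) :
    2 ^ (discr K).natAbs.primeFactors.card ≤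
      2 ^ (Fintype.card ι + 1) * (powMonoidHom 2 : ClassGroup (𝓞 K) →* _).range.index := by
  have hsub : (discr K).natAbs.primeFactors ⊆ ramifiedPrimes d := fun p hp ↦ by
    have hp' := Nat.prime_of_mem_primeFactors hp
    obtain ⟨i, hi⟩ := exists_dvd_quadDiscr_of_dvd_discr hs hgen (Nat.prime_iff_prime_int.mp hp')
      (Int.natCast_dvd.mpr (Nat.dvd_of_mem_primeFactors hp))
    have hne : quadDiscr (d i) ≠ 0 := fun h0 ↦
      mul_ne_zero four_ne_zero (hd i).ne_zero (zero_dvd_iff.mp (h0 ▸ quadDiscr_dvd (d i)))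
    exact mem_ramifiedPrimes.mpr
      ⟨i, Nat.mem_primeFactors.mpr ⟨hp', Int.natCast_dvd.mp hi, Int.natAbs_ne_zero.mpr hne⟩⟩
  calc 2 ^ (discr K).natAbs.primeFactors.card
      ≤ 2 ^ (ramifiedPrimes d).card :=
        Nat.pow_le_pow_right two_pos (Finset.card_le_card hsub)
    _ ≤ 2 ^ Fintype.card ι * Nat.card (genusGroup d) := two_pow_card_ramifiedPrimes_le
    _ ≤ 2 ^ Fintype.card ι * (2 * (powMonoidHom 2 : ClassGroup (𝓞 K) →* _).range.index) :=
        Nat.mul_le_mul_left _ (card_genusGroup_le hd hodd hs hgen)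
    _ = _ := by ring

theorem stmt6_general (hd : ∀ i, Squarefree (d i)) (hodd : ∀ i, Odd (d i))
    (hs : ∀ i, s i ^ 2 = d i) (hgen : adjoin ℚ (Set.range s) = ⊤)
    (hcyc : IsCyclic (ClassGroup (𝓞 K))) :
    (discr K).natAbs.primeFactors.card ≤ Fintype.card ι + 2 := by
  have hindex : (powMonoidHom 2 : ClassGroup (𝓞 K) →* _).range.index ≤ 2 := by
    rw [IsCyclic.index_powMonoidHom_range]
    exact Nat.gcd_le_right _ two_pos
  refine (Nat.pow_le_pow_iff_right one_lt_two).mp ?_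
  exact (two_pow_card_primeFactors_discr_le hd hodd hs hgen).trans (Nat.mul_le_mul_left _ hindex)

end Genus

lemma exists_sqrt_adjoin_biquad (d₁ d₂ : ℤ) :
    ∃ s : Fin 2 → biquad d₁ d₂, (∀ i, s i ^ 2 = ![d₁, d₂] i) ∧ adjoin ℚ (Set.range s) = ⊤ := by
  have hmem : ∀ i, ∃ t : biquad d₁ d₂, t ^ 2 = ![d₁, d₂] i := fun i ↦ by
    obtain ⟨t, ht⟩ := IsAlgClosed.exists_pow_nat_eq (![d₁, d₂] i : ℂ) two_pos
    have hmem : t ∈ biquad d₁ d₂ := subset_adjoin ℚ _ (by fin_cases i; exacts [.inl ht, .inr ht])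
    exact ⟨⟨t, hmem⟩, Subtype.ext (by simpa using ht)⟩
  choose s hs using hmem
  have hle : biquad d₁ d₂ ≤ adjoin ℚ (Set.range fun i ↦ (s i : ℂ)) := by
    have hsqrt : ∀ i, ∀ x : ℂ, x ^ 2 = (![d₁, d₂] i : ℤ) →
        x ∈ adjoin ℚ (Set.range fun i ↦ (s i : ℂ)) := fun i x hx ↦ by
      have hsi : (s i : ℂ) ∈ adjoin ℚ (Set.range fun i ↦ (s i : ℂ)) := subset_adjoin ℚ _ ⟨i, rfl⟩
      have hsq : x ^ 2 = (s i : ℂ) ^ 2 :=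
        hx.trans (by simpa using (congrArg Subtype.val (hs i)).symm)
      rcases sq_eq_sq_iff_eq_or_eq_neg.mp hsq with rfl | rfl
      exacts [hsi, neg_mem hsi]
    exact adjoin_le_iff.mpr fun x hx ↦ hx.elim (hsqrt 0 x) (hsqrt 1 x)
  have hgen : @adjoin ℚ _ (biquad d₁ d₂) _ (biquad d₁ d₂).algebra' (Set.range s) = ⊤ := by
    refine lift_injective _ (((lift_le _).trans_eq (lift_top ℚ _).symm).antisymm ?_)
    rwa [lift_top, lift_adjoin, ← Set.range_comp]
  -- The `ℚ`-algebra structure of a number field is `DivisionRing.toRatAlgebra`, which is not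
  -- reducibly equal to that of an intermediate field.
  refine ⟨s, hs, ?_⟩
  rwa [Subsingleton.elim (DivisionRing.toRatAlgebra : Algebra ℚ (biquad d₁ d₂))
    (biquad d₁ d₂).algebra']

theorem stmt6 (d₁ d₂ : ℤ) (hsf₁ : Squarefree d₁) (hsf₂ : Squarefree d₂)
    (hodd₁ : Odd d₁) (hodd₂ : Odd d₂) (hpos₁ : 0 < d₁) (hpos₂ : 0 < d₂)
    (hne : d₁ ≠ d₂) (h1 : d₁ ≠ 1) (h2 : d₂ ≠ 1) (hnsq : ¬ IsSquare (d₁ * d₂))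
    [NumberField (biquad d₁ d₂)]
    (hdeg : Module.finrank ℚ (biquad d₁ d₂) = 4)
    (hcyc : IsCyclic (ClassGroup (𝓞 (biquad d₁ d₂)))) :
    (NumberField.discr (biquad d₁ d₂)).natAbs.primeFactors.card ≤ 4 := by
  obtain ⟨s, hs, hgen⟩ := exists_sqrt_adjoin_biquad d₁ d₂
  exact stmt6_general (d := ![d₁, d₂]) (Fin.forall_fin_two.mpr ⟨hsf₁, hsf₂⟩)
    (Fin.forall_fin_two.mpr ⟨hodd₁, hodd₂⟩) hs hgen hcyc
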